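/- arXiv:1712.06725 — 2 statements merged into one kernel-verified Lean document; each statement's English description precedes it below -/
import Mathlib

section
/- Let ⋆ be a finite-type star operation on an integral domain R. If M is a ⋆-super potent maximal ⋆-ideal of R, then M is a t-super potent maximal t-ideal of R; consequently, if R is ⋆-super potent, then R is t-super potent. -/
open FractionalIdeal

/-- The fractional ideals of `R` inside its field of fractions. -/
abbrev FracId (R : Type*) [CommRing R] : Type _ :=
  FractionalIdeal (nonZeroDivisors R) (FractionRing R)

/-- A star operation on an integral domain `R`: a map on nonzero fractional ideals satisfying
`(cA)⋆ = c·A⋆`, `R⋆ = R`, `A ⊆ A⋆`, monotonicity, and idempotence.  (The value on the zero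
ideal is irrelevant.) -/
structure StarOp (R : Type*) [CommRing R] [IsDomain R] where
  star : FracId R → FracId R
  star_smul : ∀ c : FractionRing R, c ≠ 0 → ∀ I : FracId R, I ≠ 0 →
    star (spanSingleton (nonZeroDivisors R) c * I) = spanSingleton (nonZeroDivisors R) c * star I
  star_one : star 1 = 1
  le_star : ∀ I : FracId R, I ≠ 0 → I ≤ star I
  star_mono : ∀ I J : FracId R, I ≠ 0 → J ≠ 0 → I ≤ J → star I ≤ star J
  star_idem : ∀ I : FracId R, I ≠ 0 → star (star I) = star I

namespace StarOp

variable {R : Type*} [CommRing R] [IsDomain R]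

/-- A star operation has finite type if `A⋆` is the union of `J⋆` over the nonzero finitely
generated (fractional) subideals `J` of `A`. -/
def FiniteType (s : StarOp R) : Prop :=
  ∀ I : FracId R, I ≠ 0 → ∀ x : FractionRing R, (x ∈ s.star I ↔
    ∃ J : FracId R, J ≠ 0 ∧ (J : Submodule R (FractionRing R)).FG ∧ J ≤ I ∧ x ∈ s.star J)

/-- `⋆₁ ≤ ⋆₂` : `I^⋆₁ ⊆ I^⋆₂` for every nonzero fractional ideal `I`. -/
def le (s₁ s₂ : StarOp R) : Prop := ∀ I : FracId R, I ≠ 0 → s₁.star I ≤ s₂.star I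

/-- A (nonzero integral) `⋆`-ideal: an ideal with `I⋆ = I`. -/
def IsStarIdeal (s : StarOp R) (I : Ideal R) : Prop :=
  I ≠ ⊥ ∧ s.star (I : FracId R) = (I : FracId R)

/-- A maximal `⋆`-ideal: maximal among proper integral `⋆`-ideals. -/
def IsMaxStarIdeal (s : StarOp R) (M : Ideal R) : Prop :=
  M ≠ ⊤ ∧ s.IsStarIdeal M ∧ ∀ J : Ideal R, J ≠ ⊤ → s.IsStarIdeal J → M ≤ J → J = M

/-- A nonzero ideal `I` is `⋆`-invertible if `(I·I⁻¹)⋆ = R`. -/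
def IsStarInvertible (s : StarOp R) (I : Ideal R) : Prop :=
  I ≠ ⊥ ∧ s.star ((I : FracId R) * ((1 : FracId R) / (I : FracId R))) = 1

/-- A nonzero finitely generated ideal is `⋆`-rigid if it is contained in exactly one maximal
`⋆`-ideal. -/
def IsRigid (s : StarOp R) (I : Ideal R) : Prop :=
  I ≠ ⊥ ∧ I.FG ∧ ∃! M : Ideal R, s.IsMaxStarIdeal M ∧ I ≤ M

/-- A `⋆`-rigid ideal is `⋆`-super rigid if every finitely generated ideal containing it is
`⋆`-invertible. -/
def IsSuperRigid (s : StarOp R) (I : Ideal R) : Prop :=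
  s.IsRigid I ∧ ∀ J : Ideal R, J.FG → I ≤ J → s.IsStarInvertible J

/-- A maximal `⋆`-ideal is `⋆`-potent if it contains a `⋆`-rigid ideal. -/
def IsPotent (s : StarOp R) (M : Ideal R) : Prop :=
  s.IsMaxStarIdeal M ∧ ∃ I : Ideal R, s.IsRigid I ∧ I ≤ M

/-- A maximal `⋆`-ideal is `⋆`-super potent if it contains a `⋆`-super rigid ideal. -/
def IsSuperPotent (s : StarOp R) (M : Ideal R) : Prop :=
  s.IsMaxStarIdeal M ∧ ∃ I : Ideal R, s.IsSuperRigid I ∧ I ≤ M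

/-- `R` is `⋆`-potent if every maximal `⋆`-ideal is `⋆`-potent. -/
def PotentDomain (s : StarOp R) : Prop :=
  ∀ M : Ideal R, s.IsMaxStarIdeal M → s.IsPotent M

/-- `R` is `⋆`-super potent if every maximal `⋆`-ideal is `⋆`-super potent. -/
def SuperPotentDomain (s : StarOp R) : Prop :=
  ∀ M : Ideal R, s.IsMaxStarIdeal M → s.IsSuperPotent M

end StarOp

section TOperation

variable {R : Type*} [CommRing R] [IsDomain R]

/-- The `v`-operation `J ↦ (J⁻¹)⁻¹` on fractional ideals. -/
noncomputable def vOp (J : FracId R) : FracId R :=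
  (1 : FracId R) / ((1 : FracId R) / J)

/-- The `t`-closure of a fractional ideal: the union of `J^v` over all nonzero finitely
generated subideals `J` (realized as a submodule of the fraction field). -/
noncomputable def tOp (I : FracId R) : Submodule R (FractionRing R) :=
  ⨆ J ∈ {J : FracId R | J ≠ 0 ∧ (J : Submodule R (FractionRing R)).FG ∧ J ≤ I},
    ((vOp J : FracId R) : Submodule R (FractionRing R))

/-- A (nonzero integral) `t`-ideal. -/
def IsTIdeal (I : Ideal R) : Prop :=
  I ≠ ⊥ ∧ tOp (I : FracId R) = ((I : FracId R) : Submodule R (FractionRing R))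

/-- A maximal `t`-ideal: maximal among proper integral `t`-ideals. -/
def IsMaxTIdeal (M : Ideal R) : Prop :=
  M ≠ ⊤ ∧ IsTIdeal M ∧ ∀ J : Ideal R, J ≠ ⊤ → IsTIdeal J → M ≤ J → J = M

/-- A nonzero ideal `I` is `t`-invertible if `(I·I⁻¹)^t = R`. -/
def IsTInvertible (I : Ideal R) : Prop :=
  I ≠ ⊥ ∧ tOp ((I : FracId R) * ((1 : FracId R) / (I : FracId R))) =
    ((1 : FracId R) : Submodule R (FractionRing R))

/-- A nonzero finitely generated ideal is `t`-rigid if it is contained in exactly one maximal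
`t`-ideal. -/
def IsTRigid (I : Ideal R) : Prop :=
  I ≠ ⊥ ∧ I.FG ∧ ∃! M : Ideal R, IsMaxTIdeal M ∧ I ≤ M

/-- A `t`-rigid ideal is `t`-super rigid if every finitely generated ideal containing it is
`t`-invertible. -/
def IsTSuperRigid (I : Ideal R) : Prop :=
  IsTRigid I ∧ ∀ J : Ideal R, J.FG → I ≤ J → IsTInvertible J

/-- A maximal `t`-ideal is `t`-potent if it contains a `t`-rigid ideal. -/
def IsTPotent (M : Ideal R) : Prop :=
  IsMaxTIdeal M ∧ ∃ I : Ideal R, IsTRigid I ∧ I ≤ M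

/-- A maximal `t`-ideal is `t`-super potent if it contains a `t`-super rigid ideal. -/
def IsTSuperPotent (M : Ideal R) : Prop :=
  IsMaxTIdeal M ∧ ∃ I : Ideal R, IsTSuperRigid I ∧ I ≤ M

end TOperation

/-- `R` is `t`-potent if every maximal `t`-ideal is `t`-potent. -/
def TPotentDomain (R : Type*) [CommRing R] [IsDomain R] : Prop :=
  ∀ M : Ideal R, IsMaxTIdeal M → IsTPotent M

/-- `R` is `t`-super potent if every maximal `t`-ideal is `t`-super potent. -/
def TSuperPotentDomain (R : Type*) [CommRing R] [IsDomain R] : Prop :=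
  ∀ M : Ideal R, IsMaxTIdeal M → IsTSuperPotent M

/-- An ideal is invertible if `I·I⁻¹ = R` (as fractional ideals). -/
def IsInvertibleIdeal {R : Type*} [CommRing R] [IsDomain R] (I : Ideal R) : Prop :=
  I ≠ ⊥ ∧ (I : FracId R) * ((1 : FracId R) / (I : FracId R)) = 1

/-- An ideal `M` is `d`-super potent if it contains a nonzero finitely generated ideal `I`
such that every finitely generated ideal containing `I` is invertible. -/
def IsDSuperPotent {R : Type*} [CommRing R] [IsDomain R] (M : Ideal R) : Prop :=
  ∃ I : Ideal R, I ≠ ⊥ ∧ I.FG ∧ I ≤ M ∧ ∀ J : Ideal R, J.FG → I ≤ J → IsInvertibleIdeal J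

/-- An ideal `P` is divided (`P = P R_P`): every `x ∈ P` is divisible, within `P`, by every
`s ∉ P`. -/
def IsDividedIdeal {R : Type*} [CommRing R] (P : Ideal R) : Prop :=
  ∀ x ∈ P, ∀ s ∉ P, ∃ y ∈ P, x = s * y

/-- A divided prime ideal. -/
def IsDividedPrime {R : Type*} [CommRing R] (P : Ideal R) : Prop :=
  P.IsPrime ∧ IsDividedIdeal P

/-- A valuation domain: an integral domain in which, for any two elements, one divides the
other (equivalently, the ideals are totally ordered by inclusion). -/
def IsValuationDomain (A : Type*) [CommRing A] : Prop :=
  IsDomain A ∧ ∀ a b : A, a ∣ b ∨ b ∣ a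

/-- A height-one prime: a nonzero prime ideal such that the only prime strictly below it
is `(0)`. -/
def HeightOnePrime {R : Type*} [CommRing R] (P : Ideal R) : Prop :=
  P.IsPrime ∧ P ≠ ⊥ ∧ ∀ Q : Ideal R, Q.IsPrime → Q < P → Q = ⊥

/-- `R` has `t`-dimension one: every maximal `t`-ideal has height one. -/
def TDimensionOne (R : Type*) [CommRing R] [IsDomain R] : Prop :=
  ∀ M : Ideal R, IsMaxTIdeal M → HeightOnePrime M

/-- `R` is completely integrally closed: if `a ∈ R` is nonzero, `u` is in the fraction field,
and `a·uⁿ ∈ R` for all `n ≥ 1`, then `u ∈ R`. -/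
def CompletelyIntegrallyClosed (R : Type*) [CommRing R] [IsDomain R] : Prop :=
  ∀ (a : R) (u : FractionRing R), a ≠ 0 →
    (∀ n : ℕ, 0 < n → ∃ r : R, algebraMap R (FractionRing R) a * u ^ n =
      algebraMap R (FractionRing R) r) →
    ∃ r : R, algebraMap R (FractionRing R) r = u

/-- A Prüfer `v`-multiplication domain: every nonzero finitely generated ideal is
`t`-invertible. -/
def IsPvMD (R : Type*) [CommRing R] [IsDomain R] : Prop :=
  ∀ I : Ideal R, I ≠ ⊥ → I.FG → IsTInvertible I

/-- `x` (in the fraction field) belongs to the localization `R_P`, i.e. `x = r/s` with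
`s ∉ P`. -/
def MemLocalizationAt {R : Type*} [CommRing R] [IsDomain R] (P : Ideal R)
    (x : FractionRing R) : Prop :=
  ∃ r s : R, s ∉ P ∧ algebraMap R (FractionRing R) s * x = algebraMap R (FractionRing R) r

/-- An essential domain: `R` is an intersection (inside its fraction field) of localizations
at primes which are valuation domains. -/
def EssentialDomain (R : Type*) [CommRing R] [IsDomain R] : Prop :=
  ∃ 𝓟 : Set (Ideal R),
    (∀ P ∈ 𝓟, ∃ hP : P.IsPrime,
      IsValuationDomain (Localization (@Ideal.primeCompl R _ P hP))) ∧
    (∀ x : FractionRing R, (∀ P ∈ 𝓟, MemLocalizationAt P x) ↔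
      ∃ r : R, algebraMap R (FractionRing R) r = x)

/-- A generalized Krull domain: `R` is a locally finite intersection of essential rank-one
(height-one) valuation localizations. -/
def GeneralizedKrullDomain (R : Type*) [CommRing R] [IsDomain R] : Prop :=
  ∃ 𝓟 : Set (Ideal R),
    (∀ P ∈ 𝓟, ∃ hP : P.IsPrime, HeightOnePrime P ∧
      IsValuationDomain (Localization (@Ideal.primeCompl R _ P hP))) ∧
    (∀ x : FractionRing R, (∀ P ∈ 𝓟, MemLocalizationAt P x) ↔
      ∃ r : R, algebraMap R (FractionRing R) r = x) ∧
    (∀ a : R, a ≠ 0 → {P : Ideal R | P ∈ 𝓟 ∧ a ∈ P}.Finite)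

section

variable {R : Type*} [CommRing R] [IsDomain R]

theorem FracId.one_div_ne_zero {J : FracId R} (hJ : J ≠ 0) : (1 : FracId R) / J ≠ 0 := by
  obtain ⟨a, ha, h⟩ := J.isFractional
  have hmem : algebraMap R (FractionRing R) a ∈ (1 : FracId R) / J := by
    rw [mem_div_iff_of_ne_zero hJ]
    intro y hy
    obtain ⟨r, hr⟩ := h y hy
    rw [mem_one_iff]
    exact ⟨r, by rw [hr, Algebra.smul_def]⟩
  intro h0
  rw [h0, mem_zero_iff] at hmem
  exact IsFractionRing.to_map_ne_zero_of_mem_nonZeroDivisors ha hmem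

theorem FracId.mul_ne_zero {I J : FracId R} (hI : I ≠ 0) (hJ : J ≠ 0) : I * J ≠ 0 := by
  rw [Ne, eq_zero_iff] at hI hJ ⊢
  push Not at hI hJ ⊢
  obtain ⟨x, hx, hx0⟩ := hI
  obtain ⟨y, hy, hy0⟩ := hJ
  exact ⟨x * y, mul_mem_mul hx hy, _root_.mul_ne_zero hx0 hy0⟩

theorem mem_one_div_iff {J : FracId R} (hJ : J ≠ 0) {x : FractionRing R} :
    x ∈ (1 : FracId R) / J ↔ ∀ y ∈ J, x * y ∈ (1 : FracId R) :=
  mem_div_iff_of_ne_zero hJ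

theorem mem_vOp_iff {J : FracId R} (hJ : J ≠ 0) {x : FractionRing R} :
    x ∈ vOp J ↔ ∀ y ∈ (1 : FracId R) / J, x * y ∈ (1 : FracId R) :=
  mem_div_iff_of_ne_zero (FracId.one_div_ne_zero hJ)

theorem le_vOp {J : FracId R} (hJ : J ≠ 0) : J ≤ vOp J := by
  intro x hx
  refine (mem_vOp_iff hJ).2 fun y hy => ?_
  rw [mul_comm]
  exact (mem_one_div_iff hJ).1 hy x hx

theorem vOp_mono {I J : FracId R} (hI : I ≠ 0) (hJ : J ≠ 0) (h : I ≤ J) : vOp I ≤ vOp J := by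
  intro x hx
  refine (mem_vOp_iff hJ).2 fun y hy => (mem_vOp_iff hI).1 hx y ?_
  exact (mem_one_div_iff hI).2 fun z hz => (mem_one_div_iff hJ).1 hy z (h hz)

theorem vOp_one : vOp (1 : FracId R) = 1 := by
  simp [vOp]

theorem tOp_le_iff {I : FracId R} {N : Submodule R (FractionRing R)} :
    tOp I ≤ N ↔ ∀ J : FracId R, J ≠ 0 → (J : Submodule R (FractionRing R)).FG → J ≤ I →
      (vOp J : Submodule R (FractionRing R)) ≤ N := by
  simp [tOp, iSup_le_iff]

theorem vOp_le_tOp {I J : FracId R} (hJ : J ≠ 0) (hfg : (J : Submodule R (FractionRing R)).FG)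
    (h : J ≤ I) : (vOp J : Submodule R (FractionRing R)) ≤ tOp I :=
  tOp_le_iff.1 le_rfl J hJ hfg h

theorem le_tOp (I : FracId R) : (I : Submodule R (FractionRing R)) ≤ tOp I := by
  intro x hx
  by_cases h0 : x = 0
  · rw [h0]
    exact zero_mem _
  have hne : spanSingleton (nonZeroDivisors R) x ≠ 0 := spanSingleton_ne_zero_iff.2 h0
  have hle : spanSingleton (nonZeroDivisors R) x ≤ I := spanSingleton_le_iff_mem.2 hx
  have hfg : (spanSingleton (nonZeroDivisors R) x : Submodule R (FractionRing R)).FG := by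
    rw [coe_spanSingleton]
    exact Submodule.fg_span_singleton x
  exact vOp_le_tOp hne hfg hle (le_vOp hne (mem_spanSingleton_self _ x))

namespace StarOp

variable (s : StarOp R)

theorem mul_mem_star {I J : FracId R} (hI : I ≠ 0) (hJ : J ≠ 0) {c : FractionRing R}
    (h : ∀ x ∈ I, c * x ∈ J) {x : FractionRing R} (hx : x ∈ s.star I) : c * x ∈ s.star J := by
  by_cases hc : c = 0
  · rw [hc, zero_mul]
    exact zero_mem (s.star J : Submodule R (FractionRing R))
  have hne : spanSingleton (nonZeroDivisors R) c * I ≠ 0 :=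
    FracId.mul_ne_zero (spanSingleton_ne_zero_iff.2 hc) hI
  have hle : spanSingleton (nonZeroDivisors R) c * I ≤ J := by
    intro y hy
    obtain ⟨z, hz, rfl⟩ := mem_singleton_mul.1 hy
    exact h z hz
  have := s.star_mono _ _ hne hJ hle
  rw [s.star_smul c hc I hI] at this
  exact this (mem_singleton_mul.2 ⟨x, hx, rfl⟩)

theorem star_le_vOp {J : FracId R} (hJ : J ≠ 0) : s.star J ≤ vOp J := by
  intro x hx
  refine (mem_vOp_iff hJ).2 fun y hy => ?_
  rw [mul_comm, ← s.star_one]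
  exact s.mul_mem_star hJ one_ne_zero ((mem_one_div_iff hJ).1 hy) hx

variable {s}

theorem FiniteType.star_le_tOp (hft : s.FiniteType) {I : FracId R} (hI : I ≠ 0) :
    (s.star I : Submodule R (FractionRing R)) ≤ tOp I := by
  intro x hx
  obtain ⟨J, hJ, hfg, hle, hxJ⟩ := (hft I hI x).1 hx
  exact vOp_le_tOp hJ hfg hle (s.star_le_vOp hJ hxJ)

theorem FiniteType.isStarIdeal_of_isTIdeal (hft : s.FiniteType) {N : Ideal R} (hN : IsTIdeal N) :
    s.IsStarIdeal N := by
  have hne : (N : FracId R) ≠ 0 := coeIdeal_ne_zero.2 hN.1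
  refine ⟨hN.1, le_antisymm ?_ (s.le_star _ hne)⟩
  have := hft.star_le_tOp hne
  rw [hN.2] at this
  exact this

theorem vOp_le_star_of_isStarInvertible {J : Ideal R} (hJ : s.IsStarInvertible J) :
    vOp (J : FracId R) ≤ s.star (J : FracId R) := by
  intro x hx
  have hne : (J : FracId R) ≠ 0 := coeIdeal_ne_zero.2 hJ.1
  have h1 : (1 : FractionRing R) ∈ s.star ((J : FracId R) * ((1 : FracId R) / (J : FracId R))) := by
    rw [hJ.2]
    exact one_mem_one _
  rw [← mul_one x]
  refine s.mul_mem_star (FracId.mul_ne_zero hne (FracId.one_div_ne_zero hne)) hne (fun y hy => ?_) h1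
  refine FractionalIdeal.mul_induction_on hy (fun i hi j hj => ?_) fun a b ha hb => ?_
  · have hxj := (mem_vOp_iff hne).1 hx j hj
    obtain ⟨r, hr⟩ := (mem_one_iff _).1 hxj
    have : x * (i * j) = r • i := by
      rw [Algebra.smul_def, hr]
      ring
    rw [this]
    exact Submodule.smul_mem (J : FracId R).coeToSubmodule r hi
  · rw [mul_add]
    exact add_mem (S := Submodule R (FractionRing R)) ha hb

theorem FiniteType.isTInvertible (hft : s.FiniteType) {J : Ideal R} (hJ : s.IsStarInvertible J) :
    IsTInvertible J := by
  have hne : (J : FracId R) ≠ 0 := coeIdeal_ne_zero.2 hJ.1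
  have hmul := FracId.mul_ne_zero hne (FracId.one_div_ne_zero hne)
  refine ⟨hJ.1, le_antisymm (tOp_le_iff.2 fun L hL _ hle => ?_) ?_⟩
  · rw [← vOp_one]
    refine vOp_mono hL one_ne_zero (hle.trans ?_)
    have := s.le_star _ hmul
    rwa [hJ.2] at this
  · have := hft.star_le_tOp hmul
    rwa [hJ.2] at this

theorem isTIdeal_of_isSuperPotent {M : Ideal R} (hM : s.IsSuperPotent M) : IsTIdeal M := by
  obtain ⟨⟨-, ⟨hM0, hMs⟩, -⟩, I, ⟨⟨hI0, hIfg, -⟩, hinv⟩, hIM⟩ := hM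
  refine ⟨hM0, le_antisymm (tOp_le_iff.2 fun A hA hfg hAM => ?_) (le_tOp _)⟩
  obtain ⟨A, rfl⟩ := le_one_iff_exists_coeIdeal.1 (hAM.trans coeIdeal_le_one)
  have hAfg : A.FG := (coeIdeal_fg _ (IsFractionRing.injective R (FractionRing R)) A).1 hfg
  have hAM' : A ≤ M := (coeIdeal_le_coeIdeal _).1 hAM
  have hsup := hinv (A ⊔ I) (Submodule.FG.sup hAfg hIfg) le_sup_right
  have hne : ((A ⊔ I : Ideal R) : FracId R) ≠ 0 := coeIdeal_ne_zero.2 hsup.1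
  calc vOp (A : FracId R) ≤ vOp ((A ⊔ I : Ideal R) : FracId R) :=
        vOp_mono hA hne ((coeIdeal_le_coeIdeal _).2 le_sup_left)
    _ ≤ s.star ((A ⊔ I : Ideal R) : FracId R) := vOp_le_star_of_isStarInvertible hsup
    _ ≤ s.star (M : FracId R) := s.star_mono _ _ hne (coeIdeal_ne_zero.2 hM0)
        ((coeIdeal_le_coeIdeal _).2 (sup_le hAM' hIM))
    _ = M := hMs

theorem FiniteType.isStarIdeal_sSup (hft : s.FiniteType) {c : Set (Ideal R)}
    (hc : IsChain (· ≤ ·) c) (hne : c.Nonempty) (h : ∀ N ∈ c, s.IsStarIdeal N) :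
    s.IsStarIdeal (sSup c) := by
  obtain ⟨N, hN⟩ := hne
  have h0 : sSup c ≠ ⊥ := fun h' => (h N hN).1 (le_bot_iff.1 (h' ▸ le_sSup hN))
  have hS : ((sSup c : Ideal R) : FracId R) ≠ 0 := coeIdeal_ne_zero.2 h0
  refine ⟨h0, le_antisymm (fun x hx => ?_) (s.le_star _ hS)⟩
  obtain ⟨J, hJ, hfg, hle, hxJ⟩ := (hft _ hS x).1 hx
  obtain ⟨J, rfl⟩ := le_one_iff_exists_coeIdeal.1 (hle.trans coeIdeal_le_one)
  have hJfg : J.FG := (coeIdeal_fg _ (IsFractionRing.injective R (FractionRing R)) J).1 hfg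
  obtain ⟨L, hL, hJL⟩ := (CompleteLattice.isCompactElement_iff_le_of_directed_sSup_le _ J).1
    ((Submodule.fg_iff_compact J).1 hJfg) c ⟨N, hN⟩ hc.directedOn ((coeIdeal_le_coeIdeal _).1 hle)
  have hxL := s.star_mono _ _ hJ (coeIdeal_ne_zero.2 (h L hL).1)
    ((coeIdeal_le_coeIdeal _).2 hJL) hxJ
  rw [(h L hL).2] at hxL
  exact (coeIdeal_le_coeIdeal _).2 (le_sSup hL) hxL

theorem FiniteType.exists_le_isMaxStarIdeal (hft : s.FiniteType) {N : Ideal R} (hN : N ≠ ⊤)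
    (hNs : s.IsStarIdeal N) : ∃ M, s.IsMaxStarIdeal M ∧ N ≤ M := by
  have hub : ∀ c ⊆ {J : Ideal R | J ≠ ⊤ ∧ s.IsStarIdeal J}, IsChain (· ≤ ·) c → ∀ L ∈ c,
      ∃ U ∈ {J : Ideal R | J ≠ ⊤ ∧ s.IsStarIdeal J}, ∀ J ∈ c, J ≤ U := by
    intro c hcS hc L hL
    refine ⟨sSup c, ⟨?_, hft.isStarIdeal_sSup hc ⟨L, hL⟩ fun J hJ => (hcS hJ).2⟩,
      fun J hJ => le_sSup hJ⟩
    rw [Ne, Ideal.eq_top_iff_one, Submodule.mem_sSup_of_directed ⟨L, hL⟩ hc.directedOn]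
    rintro ⟨J, hJ, h1⟩
    exact (hcS hJ).1 ((Ideal.eq_top_iff_one J).2 h1)
  obtain ⟨M, hNM, hM⟩ := zorn_le_nonempty₀ _ hub N ⟨hN, hNs⟩
  exact ⟨M, ⟨hM.prop.1, hM.prop.2, fun J hJ hJs hMJ => (hM.eq_of_le ⟨hJ, hJs⟩ hMJ).symm⟩, hNM⟩

theorem FiniteType.isMaxTIdeal_of_isSuperPotent (hft : s.FiniteType) {M : Ideal R}
    (hM : s.IsSuperPotent M) : IsMaxTIdeal M :=
  ⟨hM.1.1, isTIdeal_of_isSuperPotent hM, fun J hJ hJt hMJ =>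
    hM.1.2.2 J hJ (hft.isStarIdeal_of_isTIdeal hJt) hMJ⟩

theorem FiniteType.isTSuperPotent_of_isSuperPotent (hft : s.FiniteType) {M : Ideal R}
    (hM : s.IsSuperPotent M) : IsTSuperPotent M := by
  have hMt := hft.isMaxTIdeal_of_isSuperPotent hM
  obtain ⟨hMs, I, ⟨⟨hI0, hIfg, hI⟩, hinv⟩, hIM⟩ := hM
  refine ⟨hMt, I, ⟨⟨hI0, hIfg, M, ⟨hMt, hIM⟩, ?_⟩,
    fun J hJ hIJ => hft.isTInvertible (hinv J hJ hIJ)⟩, hIM⟩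
  rintro N ⟨hN, hIN⟩
  obtain ⟨P, hP, hNP⟩ :=
    hft.exists_le_isMaxStarIdeal hN.1 (hft.isStarIdeal_of_isTIdeal hN.2.1)
  have hPM : P = M := hI.unique ⟨hP, hIN.trans hNP⟩ ⟨hMs, hIM⟩
  exact (hN.2.2 M hMt.1 hMt.2.1 (hPM ▸ hNP)).symm

end StarOp

end

/-- For a finite-type star operation `⋆`, every `⋆`-super potent maximal `⋆`-ideal
is a `t`-super potent maximal `t`-ideal; consequently a `⋆`-super potent domain is `t`-super
potent. -/
theorem tSuperPotent_of_starSuperPotent {R : Type*} [CommRing R] [IsDomain R]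
    (s : StarOp R) (hft : s.FiniteType) :
    (∀ M : Ideal R, s.IsSuperPotent M → IsTSuperPotent M) ∧
    (s.SuperPotentDomain → TSuperPotentDomain R) := by
  refine ⟨fun M hM => hft.isTSuperPotent_of_isSuperPotent hM, fun h N hN => ?_⟩
  obtain ⟨M, hM, hNM⟩ :=
    hft.exists_le_isMaxStarIdeal hN.1 (hft.isStarIdeal_of_isTIdeal hN.2.1)
  have hMt := hft.isTSuperPotent_of_isSuperPotent (h M hM)
  rwa [← hN.2.2 M hMt.1.1 hMt.1.2.1 hNM]
end

section
/- Let R be an integral domain and X an indeterminate. Then R is t-potent if and only if the polynomial ring R[X] is t-potent, and R is t-super potent if and only if R[X] is t-super potent. -/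
open FractionalIdeal

section DivisorialClosure

variable {R : Type*} [CommRing R]

/-- A finitely generated ideal contained in the union of a nonempty directed family of ideals is
contained in a member of the family. -/
theorem Ideal.FG.exists_le_of_directedOn {J : Ideal R} (hJ : J.FG) {S : Set (Ideal R)}
    (hne : S.Nonempty) (hdir : DirectedOn (· ≤ ·) S) (h : J ≤ sSup S) : ∃ I ∈ S, J ≤ I :=
  (CompleteLattice.isCompactElement_iff_le_of_directed_sSup_le _ J).1
    ((Submodule.fg_iff_compact J).1 hJ) S hne hdir h

/-- The `v`-closure of an integral ideal, described by divisibility in `R`: the fraction `b / a`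
multiplies `J` into `R` exactly when `a` divides `b * j` for every `j ∈ J`. -/
def vClosure (J : Ideal R) : Ideal R where
  carrier := {x | ∀ a b : R, (∀ j ∈ J, a ∣ b * j) → a ∣ b * x}
  add_mem' hx hy a b h := by
    rw [mul_add]
    exact dvd_add (hx a b h) (hy a b h)
  zero_mem' a b _ := by simp
  smul_mem' c x hx a b h := by
    rw [smul_eq_mul, mul_left_comm]
    exact (hx a b h).mul_left c

theorem mem_vClosure {J : Ideal R} {x : R} :
    x ∈ vClosure J ↔ ∀ a b : R, (∀ j ∈ J, a ∣ b * j) → a ∣ b * x := Iff.rfl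

theorem le_vClosure (J : Ideal R) : J ≤ vClosure J := fun x hx _ _ h => h x hx

theorem vClosure_mono {I J : Ideal R} (h : I ≤ J) : vClosure I ≤ vClosure J :=
  fun _ hx a b hab => hx a b fun j hj => hab j (h hj)

theorem vClosure_le_of_le_vClosure {I J : Ideal R} (h : I ≤ vClosure J) :
    vClosure I ≤ vClosure J :=
  fun _ hx a b hab => hx a b fun _ hj => h hj a b hab

/-- The `t`-closure of an integral ideal: the union of the `v`-closures of its finitely generated
subideals. -/
def tClosure (I : Ideal R) : Ideal R := sSup (vClosure '' {J | J.FG ∧ J ≤ I})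

theorem directedOn_vClosure (I : Ideal R) :
    DirectedOn (· ≤ ·) (vClosure '' {J : Ideal R | J.FG ∧ J ≤ I}) := by
  rintro _ ⟨J₁, ⟨h₁, h₁'⟩, rfl⟩ _ ⟨J₂, ⟨h₂, h₂'⟩, rfl⟩
  exact ⟨_, ⟨J₁ ⊔ J₂, ⟨Submodule.FG.sup h₁ h₂, sup_le h₁' h₂'⟩, rfl⟩, vClosure_mono le_sup_left,
    vClosure_mono le_sup_right⟩

theorem nonempty_vClosure (I : Ideal R) :
    (vClosure '' {J : Ideal R | J.FG ∧ J ≤ I}).Nonempty :=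
  ⟨_, ⊥, ⟨Submodule.fg_bot, bot_le⟩, rfl⟩

theorem mem_tClosure {I : Ideal R} {x : R} :
    x ∈ tClosure I ↔ ∃ J : Ideal R, J.FG ∧ J ≤ I ∧ x ∈ vClosure J := by
  rw [tClosure, Submodule.mem_sSup_of_directed (nonempty_vClosure I) (directedOn_vClosure I)]
  simp [and_assoc]

theorem le_tClosure (I : Ideal R) : I ≤ tClosure I := fun x hx =>
  mem_tClosure.2 ⟨Ideal.span {x}, Submodule.fg_span_singleton x,
    (Ideal.span_singleton_le_iff_mem I).2 hx, le_vClosure _ (Ideal.mem_span_singleton_self x)⟩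

theorem tClosure_mono {I J : Ideal R} (h : I ≤ J) : tClosure I ≤ tClosure J := fun _ hx => by
  obtain ⟨A, hA, hAI, hx⟩ := mem_tClosure.1 hx
  exact mem_tClosure.2 ⟨A, hA, hAI.trans h, hx⟩

theorem tClosure_tClosure (I : Ideal R) : tClosure (tClosure I) ≤ tClosure I := fun x hx => by
  obtain ⟨J, hJ, hJI, hx⟩ := mem_tClosure.1 hx
  obtain ⟨_, ⟨A, ⟨hA, hAI⟩, rfl⟩, hJA⟩ :=
    hJ.exists_le_of_directedOn (nonempty_vClosure I) (directedOn_vClosure I) hJI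
  exact mem_tClosure.2 ⟨A, hA, hAI, vClosure_le_of_le_vClosure hJA hx⟩

end DivisorialClosure

section Bridge

variable {R : Type*} [CommRing R] [IsDomain R]

theorem div_mul_mem_one_iff {a b x : R} (ha : a ≠ 0) :
    (algebraMap R (FractionRing R) b / algebraMap R (FractionRing R) a) *
      algebraMap R (FractionRing R) x ∈ (1 : FracId R) ↔ a ∣ b * x := by
  have ha' : algebraMap R (FractionRing R) a ≠ 0 := by
    simpa using ha
  rw [mem_one_iff]
  constructor
  · rintro ⟨r, hr⟩
    refine ⟨r, IsFractionRing.injective R (FractionRing R) ?_⟩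
    rw [map_mul, map_mul, hr]
    field_simp
  · rintro ⟨r, hr⟩
    refine ⟨r, ?_⟩
    have := congrArg (algebraMap R (FractionRing R)) hr
    rw [map_mul, map_mul] at this
    field_simp
    rw [this, mul_comm]

theorem div_mem_one_div_iff {J : Ideal R} (hJ : J ≠ ⊥) {a b : R} (ha : a ≠ 0) :
    algebraMap R (FractionRing R) b / algebraMap R (FractionRing R) a ∈
      (1 : FracId R) / (J : FracId R) ↔ ∀ j ∈ J, a ∣ b * j := by
  rw [mem_div_iff_of_ne_zero (coeIdeal_ne_zero.2 hJ)]
  constructor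
  · intro h j hj
    exact (div_mul_mem_one_iff ha).1 (h _ (mem_coeIdeal_of_mem _ hj))
  · intro h y hy
    obtain ⟨j, hj, rfl⟩ := (mem_coeIdeal _).1 hy
    exact (div_mul_mem_one_iff ha).2 (h j hj)

theorem one_div_coeIdeal_ne_zero {J : Ideal R} (hJ : J ≠ ⊥) :
    (1 : FracId R) / (J : FracId R) ≠ 0 := by
  intro h
  have h1 : algebraMap R (FractionRing R) 1 / algebraMap R (FractionRing R) 1 ∈
      (1 : FracId R) / (J : FracId R) := (div_mem_one_div_iff hJ one_ne_zero).2 (by simp)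
  rw [h, mem_zero_iff] at h1
  simp at h1

theorem algebraMap_mem_vOp_iff {J : Ideal R} (hJ : J ≠ ⊥) {x : R} :
    algebraMap R (FractionRing R) x ∈ vOp (J : FracId R) ↔ x ∈ vClosure J := by
  rw [vOp, mem_div_iff_of_ne_zero (J := (1 : FracId R) / (J : FracId R))
    (one_div_coeIdeal_ne_zero hJ), mem_vClosure]
  constructor
  · intro h a b hab
    by_cases ha : a = 0
    · subst ha
      obtain ⟨j, hj, hj0⟩ := Submodule.exists_mem_ne_zero_of_ne_bot hJ
      have := hab j hj
      rw [zero_dvd_iff, mul_eq_zero] at this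
      simp [this.resolve_right hj0]
    · rw [← div_mul_mem_one_iff ha, mul_comm]
      exact h _ ((div_mem_one_div_iff hJ ha).2 hab)
  · intro h y hy
    obtain ⟨b, a, ha, rfl⟩ := IsFractionRing.div_surjective R y
    have ha := nonZeroDivisors.ne_zero ha
    rw [mul_comm, div_mul_mem_one_iff ha]
    exact h a b ((div_mem_one_div_iff hJ ha).1 hy)

theorem vOp_le_one {J : Ideal R} (hJ : J ≠ ⊥) : vOp (J : FracId R) ≤ 1 := by
  intro x hx
  rw [vOp, mem_div_iff_of_ne_zero (J := (1 : FracId R) / (J : FracId R))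
    (one_div_coeIdeal_ne_zero hJ)] at hx
  have h1 : algebraMap R (FractionRing R) 1 / algebraMap R (FractionRing R) 1 ∈
      (1 : FracId R) / (J : FracId R) := (div_mem_one_div_iff hJ one_ne_zero).2 (by simp)
  simpa using hx _ h1

theorem tOp_coeIdeal (I : Ideal R) :
    tOp (I : FracId R) = ((tClosure I : FracId R) : Submodule R (FractionRing R)) := by
  have inj := IsFractionRing.injective R (FractionRing R)
  apply le_antisymm
  · refine iSup₂_le fun J hJ => ?_
    obtain ⟨h0, hfg, hle⟩ := hJ
    obtain ⟨A, rfl⟩ := le_one_iff_exists_coeIdeal.1 (hle.trans coeIdeal_le_one)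
    rw [coeIdeal_fg _ inj] at hfg
    rw [coeIdeal_le_coeIdeal] at hle
    have hA : A ≠ ⊥ := coeIdeal_ne_zero.1 h0
    intro x hx
    obtain ⟨r, rfl⟩ := (mem_one_iff _).1 (vOp_le_one hA hx)
    exact mem_coeIdeal_of_mem _ (mem_tClosure.2 ⟨A, hfg, hle, (algebraMap_mem_vOp_iff hA).1 hx⟩)
  · intro x hx
    obtain ⟨r, hr, rfl⟩ := (mem_coeIdeal _).1 hx
    obtain ⟨J, hJ, hJI, hr⟩ := mem_tClosure.1 hr
    by_cases h0 : J = ⊥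
    · subst h0
      have : r = 0 := by simpa using hr 0 1 (by simp)
      simp [this]
    · exact Submodule.mem_iSup_of_mem (J : FracId R) (Submodule.mem_iSup_of_mem
        ⟨coeIdeal_ne_zero.2 h0, (coeIdeal_fg _ inj J).2 hJ,
          (coeIdeal_le_coeIdeal _).2 hJI⟩ ((algebraMap_mem_vOp_iff h0).2 hr))

theorem isTIdeal_iff {I : Ideal R} : IsTIdeal I ↔ I ≠ ⊥ ∧ tClosure I ≤ I := by
  rw [IsTIdeal, tOp_coeIdeal, coeToSubmodule_inj, coeIdeal_inj]
  exact and_congr_right fun _ => ⟨fun h => h.le, fun h => h.antisymm (le_tClosure I)⟩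

theorem exists_isMaxTIdeal_le {I : Ideal R} (h0 : I ≠ ⊥) (h : tClosure I ≠ ⊤) :
    ∃ M, IsMaxTIdeal M ∧ I ≤ M := by
  obtain ⟨M, hM⟩ := zorn_le_nonempty₀ {J : Ideal R | J ≠ ⊤ ∧ tClosure J ≤ J}
    (fun c hc hchain J hJ => by
    have hd := hchain.directedOn
    refine ⟨sSup c, ⟨?_, ?_⟩, fun _ h => le_sSup h⟩
    · rw [Ideal.ne_top_iff_one, Submodule.mem_sSup_of_directed ⟨J, hJ⟩ hd]
      rintro ⟨A, hA, h1⟩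
      exact (Ideal.ne_top_iff_one A).1 (hc hA).1 h1
    · intro x hx
      obtain ⟨B, hB, hBc, hx⟩ := mem_tClosure.1 hx
      obtain ⟨A, hA, hBA⟩ := hB.exists_le_of_directedOn ⟨J, hJ⟩ hd hBc
      exact le_sSup hA ((hc hA).2 (mem_tClosure.2 ⟨B, hB, hBA, hx⟩)))
    (tClosure I) ⟨h, tClosure_tClosure I⟩
  have hIM := (le_tClosure I).trans hM.1
  refine ⟨M, ⟨hM.2.1.1, isTIdeal_iff.2 ⟨fun hb => h0 (le_bot_iff.1 (hb ▸ hIM)), hM.2.1.2⟩, ?_⟩,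
    hIM⟩
  intro J hJ hJt hMJ
  exact le_antisymm (hM.2.2 ⟨hJ, (isTIdeal_iff.1 hJt).2⟩ hMJ) hMJ

theorem IsMaxTIdeal.ne_bot {M : Ideal R} (hM : IsMaxTIdeal M) : M ≠ ⊥ := hM.2.1.1

theorem IsMaxTIdeal.tClosure_le {M : Ideal R} (hM : IsMaxTIdeal M) : tClosure M ≤ M :=
  (isTIdeal_iff.1 hM.2.1).2

theorem IsMaxTIdeal.one_notMem_vClosure {M J : Ideal R} (hM : IsMaxTIdeal M) (hJ : J.FG)
    (hJM : J ≤ M) : (1 : R) ∉ vClosure J := fun h =>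
  (Ideal.ne_top_iff_one M).1 hM.1 (hM.tClosure_le (mem_tClosure.2 ⟨J, hJ, hJM, h⟩))

theorem IsMaxTIdeal.eq_of_le {M N : Ideal R} (hM : IsMaxTIdeal M) (hN : IsMaxTIdeal N)
    (h : M ≤ N) : N = M :=
  hM.2.2 N hN.1 hN.2.1 h

theorem IsMaxTIdeal.isPrime {M : Ideal R} (hM : IsMaxTIdeal M) : M.IsPrime := by
  refine ⟨hM.1, fun {x y} hxy => or_iff_not_imp_left.2 fun hx => ?_⟩
  have hle : M ≤ M ⊔ Ideal.span {x} := le_sup_left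
  have htop : tClosure (M ⊔ Ideal.span {x}) = ⊤ := by
    by_contra hne
    obtain ⟨N, hN, hle'⟩ := exists_isMaxTIdeal_le (ne_bot_of_le_ne_bot hM.ne_bot hle) hne
    rw [hM.eq_of_le hN (hle.trans hle')] at hle'
    exact hx (hle' (le_sup_right (a := M) (Ideal.mem_span_singleton_self x)))
  obtain ⟨J, hJ, hJM, h1⟩ := mem_tClosure.1 ((Ideal.eq_top_iff_one _).1 htop)
  refine hM.tClosure_le (mem_tClosure.2 ⟨Submodule.map (LinearMap.mulLeft R y) J,
    Submodule.FG.map _ hJ, ?_, ?_⟩)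
  · rintro _ ⟨j, hj, rfl⟩
    obtain ⟨m, hm, z, hz, rfl⟩ := Submodule.mem_sup.1 (hJM hj)
    obtain ⟨c, rfl⟩ := Ideal.mem_span_singleton'.1 hz
    rw [LinearMap.mulLeft_apply, mul_add]
    refine M.add_mem (M.mul_mem_left _ hm) ?_
    rw [show y * (c * x) = c * (x * y) by ring]
    exact M.mul_mem_left _ hxy
  · intro a b hab
    have := h1 a (b * y) fun j hj => by
      simpa [mul_assoc] using hab (y * j) ⟨j, hj, rfl⟩
    simpa using this

theorem algebraMap_mul_div_eq {a b j r : R} (ha : a ≠ 0) (h : b * j = a * r) :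
    algebraMap R (FractionRing R) j *
      (algebraMap R (FractionRing R) b / algebraMap R (FractionRing R) a) =
        algebraMap R (FractionRing R) r := by
  have ha' : algebraMap R (FractionRing R) a ≠ 0 := by simpa using ha
  rw [mul_div_assoc', ← map_mul, mul_comm j, h, map_mul, mul_div_cancel_left₀ _ ha']

theorem mul_one_div_le_coeIdeal_iff {J Q : Ideal R} (hJ : J ≠ ⊥) :
    (J : FracId R) * ((1 : FracId R) / (J : FracId R)) ≤ (Q : FracId R) ↔
      ∀ a b : R, a ≠ 0 → (∀ j ∈ J, a ∣ b * j) → ∀ j ∈ J, ∀ r, b * j = a * r → r ∈ Q := by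
  rw [FractionalIdeal.mul_le]
  constructor
  · intro h a b ha hab j hj r hr
    have h2 := h _ (mem_coeIdeal_of_mem _ hj) _ ((div_mem_one_div_iff hJ ha).2 hab)
    rw [algebraMap_mul_div_eq ha hr] at h2
    obtain ⟨q, hq, hqr⟩ := (mem_coeIdeal _).1 h2
    exact IsFractionRing.injective R (FractionRing R) hqr ▸ hq
  · intro h x hx y hy
    obtain ⟨j, hj, rfl⟩ := (mem_coeIdeal _).1 hx
    obtain ⟨b, a, ha, rfl⟩ := IsFractionRing.div_surjective R y
    have ha := nonZeroDivisors.ne_zero ha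
    have hab := (div_mem_one_div_iff hJ ha).1 hy
    obtain ⟨r, hr⟩ := hab j hj
    rw [algebraMap_mul_div_eq ha hr]
    exact mem_coeIdeal_of_mem _ (h a b ha hab j hj r hr)

theorem tClosure_eq_top_iff {I : Ideal R} (hI : I ≠ ⊥) :
    tClosure I = ⊤ ↔ ∀ Q, IsMaxTIdeal Q → ¬ I ≤ Q := by
  constructor
  · intro h Q hQ hIQ
    have := (tClosure_mono hIQ).trans hQ.tClosure_le
    rw [h] at this
    exact hQ.1 (top_le_iff.1 this)
  · intro h
    by_contra hne
    obtain ⟨M, hM, hIM⟩ := exists_isMaxTIdeal_le hI hne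
    exact h M hM hIM

/-- A nonzero ideal `J` is `t`-invertible if and only if, for each maximal `t`-ideal `Q` containing
`J`, some fraction `b / a` with `(b / a) J ⊆ R` satisfies `(b / a) J ⊈ Q`. -/
theorem isTInvertible_iff {J : Ideal R} : IsTInvertible J ↔ J ≠ ⊥ ∧ ∀ Q, IsMaxTIdeal Q → J ≤ Q →
    ∃ a b : R, a ≠ 0 ∧ (∀ j ∈ J, a ∣ b * j) ∧ ∃ j ∈ J, ∃ r ∉ Q, b * j = a * r := by
  rw [IsTInvertible]
  refine and_congr_right fun hJ => ?_
  obtain ⟨B, hB⟩ := le_one_iff_exists_coeIdeal.1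
    (mul_one_div_le_one (I := (J : FracId R)))
  have hJB : J ≤ B := by
    rw [← coeIdeal_le_coeIdeal (FractionRing R), hB]
    exact le_self_mul_one_div coeIdeal_le_one
  rw [← hB, tOp_coeIdeal, coeToSubmodule_inj, coeIdeal_eq_one, Ideal.one_eq_top,
    tClosure_eq_top_iff (ne_bot_of_le_ne_bot hJ hJB)]
  refine forall₂_congr fun Q hQ => ?_
  rw [← coeIdeal_le_coeIdeal (FractionRing R), hB, mul_one_div_le_coeIdeal_iff hJ]
  constructor
  · intro h _
    by_contra! h'
    exact h fun a b ha hab j hj r hr => by_contra fun hrQ => h' a b ha hab j hj r hrQ hr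
  · intro h hall
    by_cases hJQ : J ≤ Q
    · obtain ⟨a, b, ha, hab, j, hj, r, hrQ, hr⟩ := h hJQ
      exact hrQ (hall a b ha hab j hj r hr)
    · obtain ⟨j, hj, hjQ⟩ := SetLike.not_le_iff_exists.1 hJQ
      exact hjQ (hall 1 1 one_ne_zero (by simp) j hj j rfl)

end Bridge

section PolynomialExtension

open Polynomial

variable {R : Type*} [CommRing R]

theorem contentIdeal_le_iff {f : R[X]} {Q : Ideal R} : f.contentIdeal ≤ Q ↔ f ∈ Q.map C := by
  rw [Ideal.mem_map_C_iff, contentIdeal_def, Ideal.span_le]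
  constructor
  · intro h n
    by_cases hn : f.coeff n = 0
    · simp [hn]
    · exact h (coeff_mem_coeffs hn)
  · rintro h _ hc
    obtain ⟨n, -, rfl⟩ := mem_coeffs_iff.1 hc
    exact h n

/-- The ideal generated by the coefficients of the members of an ideal of `R[X]`. -/
noncomputable def coeffIdeal (N : Ideal R[X]) : Ideal R :=
  sSup (contentIdeal '' (N : Set R[X]))

theorem coeffIdeal_le_iff {N : Ideal R[X]} {Q : Ideal R} : coeffIdeal N ≤ Q ↔ N ≤ Q.map C := by
  rw [coeffIdeal, sSup_le_iff, Set.forall_mem_image]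
  exact forall₂_congr fun f _ => contentIdeal_le_iff

theorem exists_le_contentIdeal {N : Ideal R[X]} {J : Ideal R} (hJ : J.FG)
    (h : J ≤ coeffIdeal N) : ∃ f ∈ N, J ≤ f.contentIdeal := by
  suffices hdir : DirectedOn (· ≤ ·) (contentIdeal '' (N : Set R[X])) by
    obtain ⟨_, ⟨f, hf, rfl⟩, hJf⟩ := hJ.exists_le_of_directedOn
      (S := contentIdeal '' (N : Set R[X])) ⟨_, 0, N.zero_mem, rfl⟩ hdir h
    exact ⟨f, hf, hJf⟩
  rintro _ ⟨f, hf, rfl⟩ _ ⟨g, hg, rfl⟩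
  have hcoeff (n : ℕ) :
      (f + X ^ (f.natDegree + 1) * g).coeff (n + (f.natDegree + 1)) = g.coeff n := by
    rw [coeff_add, coeff_X_pow_mul, coeff_eq_zero_of_natDegree_lt (by lia), zero_add]
  refine ⟨_, ⟨f + X ^ (f.natDegree + 1) * g, N.add_mem hf (N.mul_mem_left _ hg), rfl⟩, ?_, ?_⟩
  · refine contentIdeal_le_iff.2 (Ideal.mem_map_C_iff.2 fun n => ?_)
    rcases le_or_gt n f.natDegree with hn | hn
    · convert coeff_mem_contentIdeal (f + X ^ (f.natDegree + 1) * g) n using 1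
      rw [coeff_add, coeff_X_pow_mul', if_neg (by lia), add_zero]
    · simp [coeff_eq_zero_of_natDegree_lt hn]
  · refine contentIdeal_le_iff.2 (Ideal.mem_map_C_iff.2 fun n => ?_)
    rw [← hcoeff n]
    exact coeff_mem_contentIdeal _ _

theorem exists_fg_le_map_C {J : Ideal R[X]} (hJ : J.FG) {P : Ideal R} (h : J ≤ P.map C) :
    ∃ A : Ideal R, A.FG ∧ A ≤ P ∧ J ≤ A.map C := by
  let S : Set (Ideal R[X]) := Ideal.map C '' {A : Ideal R | A.FG ∧ A ≤ P}
  have hdir : DirectedOn (· ≤ ·) S := by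
    rintro _ ⟨A, ⟨hA, hA'⟩, rfl⟩ _ ⟨B, ⟨hB, hB'⟩, rfl⟩
    exact ⟨_, ⟨A ⊔ B, ⟨Submodule.FG.sup hA hB, sup_le hA' hB'⟩, rfl⟩, Ideal.map_mono le_sup_left,
      Ideal.map_mono le_sup_right⟩
  have hle : J ≤ sSup S := by
    intro f hf
    have hmem : f.contentIdeal.map C ∈ S :=
      ⟨_, ⟨f.contentIdeal_FG, contentIdeal_le_iff.2 (h hf)⟩, rfl⟩
    exact le_sSup hmem (contentIdeal_le_iff.1 le_rfl)
  obtain ⟨_, ⟨A, hA, rfl⟩, hJA⟩ :=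
    hJ.exists_le_of_directedOn (S := S) ⟨_, ⊥, ⟨Submodule.fg_bot, bot_le⟩, rfl⟩ hdir hle
  exact ⟨A, hA.1, hA.2, hJA⟩

theorem coeffIdeal_fg {J : Ideal R[X]} (hJ : J.FG) : (coeffIdeal J).FG := by
  obtain ⟨A, hA, hAJ, hJA⟩ := exists_fg_le_map_C hJ (coeffIdeal_le_iff.1 le_rfl)
  rwa [← hAJ.antisymm (coeffIdeal_le_iff.2 hJA)]

theorem map_C_le_map_C_iff {I Q : Ideal R} : I.map C ≤ Q.map C ↔ I ≤ Q := by
  refine ⟨fun h x hx => ?_, fun h => Ideal.map_mono h⟩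
  simpa using Ideal.mem_map_C_iff.1 (h (Ideal.mem_map_of_mem C hx)) 0

theorem map_C_ne_top {Q : Ideal R} (hQ : Q ≠ ⊤) : Q.map C ≠ ⊤ := by
  rw [← Ideal.map_top C]
  exact fun h => hQ (top_le_iff.1 (map_C_le_map_C_iff.1 h.ge))

theorem map_C_ne_bot {Q : Ideal R} (hQ : Q ≠ ⊥) : Q.map C ≠ ⊥ := by
  rw [← Ideal.map_bot (f := C)]
  exact fun h => hQ (le_bot_iff.1 (map_C_le_map_C_iff.1 h.le))

theorem tClosure_map_C_le {P : Ideal R} (hP : tClosure P ≤ P) :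
    tClosure (P.map C) ≤ P.map C := by
  intro x hx
  obtain ⟨J, hJ, hJP, hx⟩ := mem_tClosure.1 hx
  obtain ⟨A, hA, hAP, hJA⟩ := exists_fg_le_map_C hJ hJP
  refine Ideal.mem_map_C_iff.2 fun n => hP (mem_tClosure.2 ⟨A, hA, hAP, fun a b hab => ?_⟩)
  have := hx (C a) (C b) fun j hj => (C_dvd_iff_dvd_coeff _ _).2 fun k => by
    rw [coeff_C_mul]
    exact hab _ (Ideal.mem_map_C_iff.1 (hJA hj) k)
  simpa using (C_dvd_iff_dvd_coeff _ _).1 this n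

/-- If the content ideal of `f` has trivial `v`-closure, then `f` is regular modulo every
constant. -/
theorem C_dvd_of_C_dvd_mul {f g : R[X]} {p : R} (hf : 1 ∈ vClosure f.contentIdeal)
    (h : C p ∣ g * f) : C p ∣ g := by
  let φ := Ideal.Quotient.mk (Ideal.span {p})
  have hφ (r : R) : φ r = 0 ↔ p ∣ r := by
    rw [Ideal.Quotient.eq_zero_iff_mem, Ideal.mem_span_singleton]
  have hmap (q : R[X]) : q.map φ = 0 ↔ C p ∣ q := by
    simp [C_dvd_iff_dvd_coeff, Polynomial.ext_iff, hφ]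
  have hreg : f.map φ ∈ nonZeroDivisors (R ⧸ Ideal.span {p})[X] := by
    rw [Polynomial.mem_nonZeroDivisors_iff]
    intro s hs
    obtain ⟨r, rfl⟩ := Ideal.Quotient.mk_surjective s
    have hr (n : ℕ) : p ∣ r * f.coeff n := by
      have := congrArg (fun q => q.coeff n) hs
      simpa [← hφ, φ] using this
    refine (hφ r).2 ?_
    have := hf p r fun c hc => ?_
    · simpa using this
    · have hle : f.contentIdeal ≤ Submodule.comap (LinearMap.mulLeft R r) (Ideal.span {p}) :=
        contentIdeal_le_iff.2 (Ideal.mem_map_C_iff.2 fun n => Ideal.mem_span_singleton.2 (hr n))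
      exact Ideal.mem_span_singleton.1 (hle hc)
  rw [← hmap] at h ⊢
  rw [Polynomial.map_mul] at h
  exact (mul_right_mem_nonZeroDivisors_eq_zero_iff hreg).1 h

theorem exists_one_mem_vClosure_contentIdeal {N : Ideal R[X]}
    (h : tClosure (coeffIdeal N) = ⊤) : ∃ f ∈ N, 1 ∈ vClosure f.contentIdeal := by
  obtain ⟨J, hJ, hJN, h1⟩ := mem_tClosure.1 ((Ideal.eq_top_iff_one _).1 h)
  obtain ⟨f, hf, hJf⟩ := exists_le_contentIdeal hJ hJN
  exact ⟨f, hf, vClosure_mono hJf h1⟩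

variable [IsDomain R]

theorem exists_isMaxTIdeal_le_map_C {N : Ideal R[X]} (hN0 : N ≠ ⊥)
    (h : tClosure (coeffIdeal N) ≠ ⊤) : ∃ Q, IsMaxTIdeal Q ∧ N ≤ Q.map C := by
  have h0 : coeffIdeal N ≠ ⊥ := fun hb => hN0 <| by
    simpa [Ideal.map_bot] using coeffIdeal_le_iff.1 hb.le
  obtain ⟨Q, hQ, hle⟩ := exists_isMaxTIdeal_le h0 h
  exact ⟨Q, hQ, coeffIdeal_le_iff.1 hle⟩

theorem one_mem_vClosure_span_pair {f : R[X]} {p : R} (hp : p ≠ 0)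
    (hf : 1 ∈ vClosure f.contentIdeal) : (1 : R[X]) ∈ vClosure (Ideal.span {C p, f}) := by
  intro a b hab
  have hp' : C p ≠ 0 := by simpa using hp
  obtain ⟨g, hg⟩ := hab (C p) (Ideal.subset_span (by simp))
  obtain ⟨h, hh⟩ := hab f (Ideal.subset_span (by simp))
  rw [mul_one]
  by_cases ha : a = 0
  · subst ha
    rw [zero_mul, mul_eq_zero] at hg
    simp [hg.resolve_right hp']
  · have hgf : C p ∣ g * f := ⟨h, mul_left_cancel₀ ha (by linear_combination C p * hh - f * hg)⟩
    obtain ⟨q, rfl⟩ := C_dvd_of_C_dvd_mul hf hgf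
    exact ⟨q, mul_left_cancel₀ hp' (by linear_combination hg)⟩

theorem exists_le_map_C_of_C_mem {N : Ideal R[X]} (hN : N ≠ ⊤) (hNt : tClosure N ≤ N) {p : R}
    (hp : p ≠ 0) (hpN : C p ∈ N) : ∃ Q, IsMaxTIdeal Q ∧ N ≤ Q.map C := by
  refine exists_isMaxTIdeal_le_map_C (fun h => hp (by simpa [h] using hpN)) fun h => ?_
  obtain ⟨f, hf, h1⟩ := exists_one_mem_vClosure_contentIdeal h
  refine (Ideal.ne_top_iff_one N).1 hN (hNt (mem_tClosure.2
    ⟨Ideal.span {C p, f}, Submodule.fg_span (by simp), ?_, one_mem_vClosure_span_pair hp h1⟩))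
  rw [Ideal.span_le]
  rintro _ (rfl | rfl)
  exacts [hpN, hf]

theorem IsMaxTIdeal.map_C {P : Ideal R} (hP : IsMaxTIdeal P) : IsMaxTIdeal (P.map C) := by
  refine ⟨map_C_ne_top hP.1, isTIdeal_iff.2 ⟨map_C_ne_bot hP.ne_bot,
    tClosure_map_C_le hP.tClosure_le⟩, fun N hN hNt hPN => le_antisymm ?_ hPN⟩
  obtain ⟨p, hp, hp0⟩ := Submodule.exists_mem_ne_zero_of_ne_bot hP.ne_bot
  obtain ⟨Q, hQ, hNQ⟩ := exists_le_map_C_of_C_mem hN (isTIdeal_iff.1 hNt).2 hp0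
    (hPN (Ideal.mem_map_of_mem C hp))
  rwa [← hP.eq_of_le hQ (map_C_le_map_C_iff.1 (hPN.trans hNQ))]

theorem IsMaxTIdeal.exists_eq_map_C {N : Ideal R[X]} (hN : IsMaxTIdeal N) {p : R} (hp : p ≠ 0)
    (hpN : C p ∈ N) : ∃ P, IsMaxTIdeal P ∧ N = P.map C := by
  obtain ⟨Q, hQ, hNQ⟩ := exists_le_map_C_of_C_mem hN.1 hN.tClosure_le hp hpN
  exact ⟨Q, hQ, (hN.eq_of_le hQ.map_C hNQ).symm⟩

theorem IsMaxTIdeal.exists_mem_one_mem_vClosure {N : Ideal R[X]} (hN : IsMaxTIdeal N)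
    (h0 : ∀ p : R, C p ∈ N → p = 0) : ∃ f ∈ N, 1 ∈ vClosure f.contentIdeal := by
  refine exists_one_mem_vClosure_contentIdeal (by_contra fun h => ?_)
  obtain ⟨Q, hQ, hNQ⟩ := exists_isMaxTIdeal_le_map_C hN.ne_bot h
  obtain ⟨p, hp, hp0⟩ := Submodule.exists_mem_ne_zero_of_ne_bot hQ.ne_bot
  rw [← hN.eq_of_le hQ.map_C hNQ] at h0
  exact hp0 (h0 p (Ideal.mem_map_of_mem C hp))

/-- A nonzero ideal of `R[X]` contracting to zero in `R` becomes principal after inverting the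
nonzero constants. -/
theorem exists_mem_forall_C_mul_mem_span {N : Ideal R[X]} (hN : N ≠ ⊥)
    (h0 : ∀ p : R, C p ∈ N → p = 0) :
    ∃ f ∈ N, f ≠ 0 ∧ ∀ h ∈ N, ∃ d : R, d ≠ 0 ∧ C d * h ∈ Ideal.span {f} := by
  obtain ⟨g, hg, hg0⟩ := Submodule.exists_mem_ne_zero_of_ne_bot hN
  obtain ⟨f, ⟨hf, hf0⟩, hmin⟩ := exists_minimalFor_of_wellFoundedLT
    (fun q : R[X] => q ∈ N ∧ q ≠ 0) natDegree ⟨g, hg, hg0⟩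
  refine ⟨f, hf, hf0, fun h => ?_⟩
  induction hn : h.natDegree using Nat.strong_induction_on generalizing h with
  | _ n ih =>
    intro hh
    by_cases hh0 : h = 0
    · exact ⟨1, one_ne_zero, by simp [hh0]⟩
    have hpos : 0 < h.natDegree := by
      by_contra hdeg
      obtain ⟨c, rfl⟩ := natDegree_eq_zero.1 (by lia : h.natDegree = 0)
      exact hh0 (by simp [h0 c hh])
    have hle : f.natDegree ≤ h.natDegree := by
      by_contra! hlt
      exact hlt.not_ge (hmin ⟨hh, hh0⟩ hlt.le)
    have hlt := natDegree_cancelLeads_lt_of_natDegree_le_natDegree hle hpos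
    have hmem : f.cancelLeads h ∈ N := N.sub_mem (N.mul_mem_left _ hh) (N.mul_mem_left _ hf)
    obtain ⟨d, hd, hdf⟩ := ih _ (hn ▸ hlt) _ rfl hmem
    refine ⟨d * f.leadingCoeff, mul_ne_zero hd (by simpa using hf0), ?_⟩
    have := (Ideal.span {f}).add_mem hdf ((Ideal.span {f}).mul_mem_left
      (C d * (C h.leadingCoeff * X ^ (h.natDegree - f.natDegree)))
      (Ideal.mem_span_singleton_self f))
    convert this using 1
    rw [cancelLeads, Nat.sub_eq_zero_of_le hle, C_mul]
    ring

theorem Ideal.FG.exists_C_mul_mem {J I : Ideal R[X]} (hJ : J.FG)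
    (h : ∀ j ∈ J, ∃ d : R, d ≠ 0 ∧ C d * j ∈ I) : ∃ d : R, d ≠ 0 ∧ ∀ j ∈ J, C d * j ∈ I := by
  let S : Set (Ideal R[X]) := {A | ∃ d : R, d ≠ 0 ∧
    A = Submodule.comap (LinearMap.mulLeft R[X] (C d)) I}
  have hdir : DirectedOn (· ≤ ·) S := by
    rintro _ ⟨d, hd, rfl⟩ _ ⟨e, he, rfl⟩
    refine ⟨_, ⟨d * e, mul_ne_zero hd he, rfl⟩, fun j hj => ?_, fun j hj => ?_⟩
    · have : C (d * e) * j = C e * (C d * j) := by rw [C_mul]; ring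
      simpa only [Submodule.mem_comap, LinearMap.mulLeft_apply, this] using I.mul_mem_left _ hj
    · have : C (d * e) * j = C d * (C e * j) := by rw [C_mul]; ring
      simpa only [Submodule.mem_comap, LinearMap.mulLeft_apply, this] using I.mul_mem_left _ hj
  have hle : J ≤ sSup S := by
    intro j hj
    obtain ⟨d, hd, hdj⟩ := h j hj
    have hS : Submodule.comap (LinearMap.mulLeft R[X] (C d)) I ∈ S := ⟨d, hd, rfl⟩
    exact le_sSup hS hdj
  obtain ⟨_, ⟨d, hd, rfl⟩, hJd⟩ :=
    hJ.exists_le_of_directedOn (S := S) ⟨_, 1, one_ne_zero, rfl⟩ hdir hle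
  exact ⟨d, hd, fun j hj => hJd hj⟩

/-- A maximal `t`-ideal of `R[X]` contracting to zero in `R` is `t`-super potent. -/
theorem IsMaxTIdeal.exists_isTSuperRigid {N : Ideal R[X]} (hN : IsMaxTIdeal N)
    (h0 : ∀ p : R, C p ∈ N → p = 0) : ∃ I, IsTSuperRigid I ∧ I ≤ N := by
  obtain ⟨g, hg, hg1⟩ := hN.exists_mem_one_mem_vClosure h0
  obtain ⟨f, hf, hf0, hfN⟩ := exists_mem_forall_C_mul_mem_span hN.ne_bot h0
  have hle : Ideal.span {f, g} ≤ N := by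
    rw [Ideal.span_le]
    rintro _ (rfl | rfl)
    exacts [hf, hg]
  have hfI : f ∈ Ideal.span {f, g} := Ideal.subset_span (by simp)
  have hgI : g ∈ Ideal.span {f, g} := Ideal.subset_span (by simp)
  have huniq (M : Ideal R[X]) (hM : IsMaxTIdeal M) (hIM : Ideal.span {f, g} ≤ M) : M = N := by
    by_cases hM0 : ∀ p : R, C p ∈ M → p = 0
    · refine hN.eq_of_le hM fun h hh => ?_
      obtain ⟨d, hd, hdh⟩ := hfN h hh
      have := (Ideal.span_singleton_le_iff_mem M).2 (hIM hfI) hdh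
      exact (hM.isPrime.mem_or_mem this).resolve_left fun hdM => hd (hM0 d hdM)
    · push Not at hM0
      obtain ⟨p, hpM, hp⟩ := hM0
      obtain ⟨Q, hQ, rfl⟩ := hM.exists_eq_map_C hp hpM
      exact absurd hg1 (hQ.one_notMem_vClosure g.contentIdeal_FG (contentIdeal_le_iff.2 (hIM hgI)))
  have hne {J : Ideal R[X]} (hJ : Ideal.span {f, g} ≤ J) : J ≠ ⊥ :=
    (Submodule.ne_bot_iff J).2 ⟨f, hJ hfI, hf0⟩
  refine ⟨_, ⟨⟨hne le_rfl, Submodule.fg_span (by simp), N, ⟨hN, hle⟩, fun M hM =>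
    huniq M hM.1 hM.2⟩, fun J hJ hIJ => isTInvertible_iff.2 ⟨hne hIJ, fun Q hQ hJQ => ?_⟩⟩, hle⟩
  obtain rfl := huniq Q hQ (hIJ.trans hJQ)
  obtain ⟨d, hd, hdJ⟩ := hJ.exists_C_mul_mem fun j hj => hfN j (hJQ hj)
  exact ⟨f, C d, hf0, fun j hj => Ideal.mem_span_singleton.1 (hdJ j hj), f, hIJ hfI, C d,
    fun h => hd (h0 d h), mul_comm _ _⟩

theorem IsTRigid.map_C {I : Ideal R} (hI : IsTRigid I) : IsTRigid (I.map C) := by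
  obtain ⟨hI0, hfg, P, ⟨hP, hIP⟩, huniq⟩ := hI
  refine ⟨map_C_ne_bot hI0, hfg.map C, P.map C, ⟨hP.map_C, Ideal.map_mono hIP⟩, ?_⟩
  rintro M ⟨hM, hIM⟩
  obtain ⟨p, hp, hp0⟩ := Submodule.exists_mem_ne_zero_of_ne_bot hI0
  obtain ⟨Q, hQ, rfl⟩ := hM.exists_eq_map_C hp0 (hIM (Ideal.mem_map_of_mem C hp))
  rw [huniq Q ⟨hQ, map_C_le_map_C_iff.1 hIM⟩]

theorem IsTSuperRigid.map_C {I : Ideal R} (hI : IsTSuperRigid I) : IsTSuperRigid (I.map C) := by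
  refine ⟨hI.1.map_C, fun J hJ hIJ => isTInvertible_iff.2
    ⟨ne_bot_of_le_ne_bot hI.1.map_C.1 hIJ, fun N hN hJN => ?_⟩⟩
  obtain ⟨p, hp, hp0⟩ := Submodule.exists_mem_ne_zero_of_ne_bot hI.1.1
  obtain ⟨P, hP, rfl⟩ := hN.exists_eq_map_C hp0 (hJN (hIJ (Ideal.mem_map_of_mem C hp)))
  have hJc : J ≤ (coeffIdeal J).map C := coeffIdeal_le_iff.1 le_rfl
  obtain ⟨-, hinv⟩ := isTInvertible_iff.1 (hI.2 (coeffIdeal J) (coeffIdeal_fg hJ)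
    (map_C_le_map_C_iff.1 (hIJ.trans hJc)))
  obtain ⟨a, b, ha, hab, c, hc, r, hrP, hcr⟩ := hinv P hP (coeffIdeal_le_iff.2 hJN)
  have hdvd (j) (hj : j ∈ J) : C a ∣ C b * j := (C_dvd_iff_dvd_coeff _ _).2 fun n => by
    rw [coeff_C_mul]
    exact hab _ (Ideal.mem_map_C_iff.1 (hJc hj) n)
  refine ⟨C a, C b, by simpa using ha, hdvd, ?_⟩
  by_contra! hcon
  have hle : coeffIdeal J ≤ Submodule.comap (LinearMap.mulLeft R b) (Ideal.span {a} * P) := by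
    refine coeffIdeal_le_iff.2 fun j hj => Ideal.mem_map_C_iff.2 fun n => ?_
    obtain ⟨q, hq⟩ := hdvd j hj
    have hqP : q ∈ P.map C := by_contra fun hqP => hcon j hj q hqP hq
    refine Ideal.mem_span_singleton_mul.2 ⟨q.coeff n, Ideal.mem_map_C_iff.1 hqP n, ?_⟩
    simpa using (congrArg (fun s => s.coeff n) hq).symm
  obtain ⟨z, hz, hzr⟩ := Ideal.mem_span_singleton_mul.1 (hle hc)
  rw [LinearMap.mulLeft_apply, hcr] at hzr
  exact hrP (mul_left_cancel₀ ha hzr ▸ hz)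

theorem IsTRigid.of_le_map_C {A : Ideal R[X]} (hA : IsTRigid A) {I P : Ideal R} (hI : I.FG)
    (hP : IsMaxTIdeal P) (hIP : I ≤ P) (hAI : A ≤ I.map C) : IsTRigid I := by
  obtain ⟨hA0, -, N, -, huniq⟩ := hA
  refine ⟨?_, hI, P, ⟨hP, hIP⟩, ?_⟩
  · rintro rfl
    exact hA0 (by simpa [Ideal.map_bot] using hAI)
  rintro Q ⟨hQ, hIQ⟩
  have hPN := huniq _ ⟨hP.map_C, hAI.trans (Ideal.map_mono hIP)⟩
  have hQN := huniq _ ⟨hQ.map_C, hAI.trans (Ideal.map_mono hIQ)⟩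
  exact hP.eq_of_le hQ (map_C_le_map_C_iff.1 (hPN.trans hQN.symm).le)

theorem IsTInvertible.of_map_C {J : Ideal R} (hJ : IsTInvertible (J.map C)) :
    IsTInvertible J := by
  obtain ⟨h0, hinv⟩ := isTInvertible_iff.1 hJ
  have hJ0 : J ≠ ⊥ := by
    rintro rfl
    exact h0 Ideal.map_bot
  refine isTInvertible_iff.2 ⟨hJ0, fun Q hQ hJQ => by_contra fun hcon => ?_⟩
  push Not at hcon
  obtain ⟨a, b, ha, hab, s, hs, r, hr, hsr⟩ := hinv _ hQ.map_C (Ideal.map_mono hJQ)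
  obtain ⟨c, hc, hc0⟩ := Submodule.exists_mem_ne_zero_of_ne_bot hJ0
  obtain ⟨g, hg⟩ := hab (C c) (Ideal.mem_map_of_mem C hc)
  have hcg (j : R) (hj : j ∈ J) : C c ∣ g * C j := by
    obtain ⟨q, hq⟩ := hab (C j) (Ideal.mem_map_of_mem C hj)
    exact ⟨q, mul_left_cancel₀ ha (by linear_combination C c * hq - C j * hg)⟩
  have hcoeff (k : ℕ) (j : R) (hj : j ∈ J) : c ∣ g.coeff k * j := by
    simpa using (C_dvd_iff_dvd_coeff _ _).1 (hcg j hj) k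
  have hle : J.map C ≤ Submodule.comap (LinearMap.mulLeft R[X] g)
      (Ideal.span {C c} * Q.map C) := by
    refine Ideal.map_le_iff_le_comap.2 fun j hj => ?_
    obtain ⟨q, hq⟩ := hcg j hj
    refine Ideal.mem_span_singleton_mul.2 ⟨q, Ideal.mem_map_C_iff.2 fun k => ?_, hq.symm⟩
    refine by_contra fun hqQ => hcon c (g.coeff k) hc0 (hcoeff k) j hj _ hqQ ?_
    simpa using congrArg (fun s => s.coeff k) hq
  obtain ⟨z, hz, hzs⟩ := Ideal.mem_span_singleton_mul.1 (hle hs)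
  rw [LinearMap.mulLeft_apply] at hzs
  have : z = r := mul_left_cancel₀ (mul_ne_zero ha (C_ne_zero.2 hc0))
    (by linear_combination a * hzs + C c * hsr - s * hg)
  exact hr (this ▸ hz)

theorem IsTSuperRigid.of_le_map_C {A : Ideal R[X]} (hA : IsTSuperRigid A) {I P : Ideal R}
    (hI : I.FG) (hP : IsMaxTIdeal P) (hIP : I ≤ P) (hAI : A ≤ I.map C) : IsTSuperRigid I :=
  ⟨hA.1.of_le_map_C hI hP hIP hAI, fun J hJ hIJ =>
    (hA.2 (J.map C) (hJ.map C) (hAI.trans (Ideal.map_mono hIJ))).of_map_C⟩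

end PolynomialExtension

/-- `R` is `t`-potent iff `R[X]` is `t`-potent, and `R` is `t`-super potent iff
`R[X]` is `t`-super potent. -/
theorem tPotent_polynomial_iff {R : Type*} [CommRing R] [IsDomain R] :
    (TPotentDomain R ↔ TPotentDomain (Polynomial R)) ∧
    (TSuperPotentDomain R ↔ TSuperPotentDomain (Polynomial R)) := by
  refine ⟨⟨fun h N hN => ⟨hN, ?_⟩, fun h P hP => ⟨hP, ?_⟩⟩,
    ⟨fun h N hN => ⟨hN, ?_⟩, fun h P hP => ⟨hP, ?_⟩⟩⟩
  · by_cases h0 : ∀ p : R, Polynomial.C p ∈ N → p = 0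
    · obtain ⟨I, hI, hIN⟩ := hN.exists_isTSuperRigid h0
      exact ⟨I, hI.1, hIN⟩
    · push Not at h0
      obtain ⟨p, hpN, hp⟩ := h0
      obtain ⟨P, hP, rfl⟩ := hN.exists_eq_map_C hp hpN
      obtain ⟨I, hI, hIP⟩ := (h P hP).2
      exact ⟨_, hI.map_C, Ideal.map_mono hIP⟩
  · obtain ⟨A, hA, hAP⟩ := (h _ hP.map_C).2
    obtain ⟨I, hI, hIP, hAI⟩ := exists_fg_le_map_C hA.2.1 hAP
    exact ⟨I, hA.of_le_map_C hI hP hIP hAI, hIP⟩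
  · by_cases h0 : ∀ p : R, Polynomial.C p ∈ N → p = 0
    · exact hN.exists_isTSuperRigid h0
    · push Not at h0
      obtain ⟨p, hpN, hp⟩ := h0
      obtain ⟨P, hP, rfl⟩ := hN.exists_eq_map_C hp hpN
      obtain ⟨I, hI, hIP⟩ := (h P hP).2
      exact ⟨_, hI.map_C, Ideal.map_mono hIP⟩
  · obtain ⟨A, hA, hAP⟩ := (h _ hP.map_C).2
    obtain ⟨I, hI, hIP, hAI⟩ := exists_fg_le_map_C hA.1.2.1 hAP
    exact ⟨I, hA.of_le_map_C hI hP hIP hAI, hIP⟩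
end
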